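/- Let F : [a,b] × [0,T) → ℝ² be a smooth planar curve shortening flow with nonvanishing speed, satisfying κ(a,t) = κ(b,t) = 0 for all t. Then d/dt ∫_a^b (∂_s κ)² v du = ∫_a^b ( 7κ²(∂_s κ)² - 2(∂_s² κ)² ) v du for every t ∈ (0,T). -/

import Mathlib

open Real MeasureTheory Set Filter

noncomputable section

/-- The Euclidean plane. -/
abbrev E2 : Type := EuclideanSpace ℝ (Fin 2)

/-- Rotation of a vector by +π/2. -/
def rot (w : E2) : E2 := !₂[-(w 1), w 0]

namespace CSF

variable (F : ℝ → ℝ → E2)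

/-- The partial derivative ∂ᵤF. -/
def pu (u t : ℝ) : E2 := deriv (fun x => F x t) u

/-- The partial derivative ∂ₜF. -/
def pt (u t : ℝ) : E2 := deriv (fun x => F u x) t

/-- The speed v = ‖∂ᵤF‖. -/
def speed (u t : ℝ) : ℝ := ‖pu F u t‖

/-- The arclength derivative ∂ₛ f = v⁻¹ ∂ᵤ f of a quantity along the flow. -/
def sderiv {X : Type*} [NormedAddCommGroup X] [NormedSpace ℝ X]
    (f : ℝ → ℝ → X) (u t : ℝ) : X :=
  (speed F u t)⁻¹ • deriv (fun x => f x t) u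

/-- The unit tangent T = ∂ₛ F. -/
def tang (u t : ℝ) : E2 := (speed F u t)⁻¹ • pu F u t

/-- The unit normal N, the tangent rotated by +π/2. -/
def nor (u t : ℝ) : E2 := rot (tang F u t)

/-- The curvature κ = ⟨∂ₛT, N⟩. -/
def curv (u t : ℝ) : ℝ := inner (𝕜 := ℝ) (sderiv F (tang F) u t) (nor F u t)

/-- `F` is a smooth planar curve shortening flow with nonvanishing speed on `[a,b] × [0,T)`:
it is smooth, `∂ᵤF ≠ 0` on the domain, and `∂ₜF = κN` on the domain. -/
def IsCSF (a b T : ℝ) : Prop :=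
  ContDiff ℝ (⊤ : ℕ∞) (fun p : ℝ × ℝ => F p.1 p.2) ∧
  (∀ u ∈ Icc a b, ∀ t ∈ Ico 0 T, pu F u t ≠ 0) ∧
  (∀ u ∈ Icc a b, ∀ t ∈ Ico 0 T, pt F u t = curv F u t • nor F u t)

end CSF

namespace CSFaux

open scoped ContDiff Topology

def du (f : ℝ → ℝ → ℝ) (u t : ℝ) : ℝ := deriv (fun x => f x t) u
def dt (f : ℝ → ℝ → ℝ) (u t : ℝ) : ℝ := deriv (fun x => f u x) t

def Sm (f : ℝ → ℝ → ℝ) (u t : ℝ) : Prop :=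
  ContDiffAt ℝ ∞ (fun p : ℝ × ℝ => f p.1 p.2) (u, t)

variable {f g : ℝ → ℝ → ℝ} {u t : ℝ}

lemma Sm.diff (h : Sm f u t) : DifferentiableAt ℝ (fun p : ℝ × ℝ => f p.1 p.2) (u, t) :=
  ContDiffAt.differentiableAt h (by simp)

lemma Sm.hu' (h : DifferentiableAt ℝ (fun p : ℝ × ℝ => f p.1 p.2) (u, t)) :
    HasDerivAt (fun x => f x t) (fderiv ℝ (fun p : ℝ × ℝ => f p.1 p.2) (u, t) (1, 0)) u := by
  have h1 : HasDerivAt (fun x : ℝ => (x, t)) ((1 : ℝ), (0 : ℝ)) u :=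
    (hasDerivAt_id u).prodMk (hasDerivAt_const u t)
  exact h.hasFDerivAt.comp_hasDerivAt u h1

lemma Sm.ht' (h : DifferentiableAt ℝ (fun p : ℝ × ℝ => f p.1 p.2) (u, t)) :
    HasDerivAt (fun x => f u x) (fderiv ℝ (fun p : ℝ × ℝ => f p.1 p.2) (u, t) (0, 1)) t := by
  have h1 : HasDerivAt (fun x : ℝ => (u, x)) ((0 : ℝ), (1 : ℝ)) t :=
    (hasDerivAt_const t u).prodMk (hasDerivAt_id t)
  exact h.hasFDerivAt.comp_hasDerivAt t h1

lemma Sm.hu (h : Sm f u t) : HasDerivAt (fun x => f x t) (du f u t) u :=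
  (Sm.hu' h.diff).differentiableAt.hasDerivAt

lemma Sm.ht (h : Sm f u t) : HasDerivAt (fun x => f u x) (dt f u t) t :=
  (Sm.ht' h.diff).differentiableAt.hasDerivAt

lemma Sm.ev_diff (h : Sm f u t) :
    ∀ᶠ p in 𝓝 (u, t), DifferentiableAt ℝ (fun p : ℝ × ℝ => f p.1 p.2) p := by
  have h1 : ContDiffAt ℝ 1 (fun p : ℝ × ℝ => f p.1 p.2) (u, t) := ContDiffAt.of_le h (by simp)
  filter_upwards [h1.eventually (by simp)] with p hp using hp.differentiableAt (by simp)

lemma Sm.ev_du (h : Sm f u t) : (fun p : ℝ × ℝ => du f p.1 p.2) =ᶠ[𝓝 (u, t)]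
    fun p => fderiv ℝ (fun p : ℝ × ℝ => f p.1 p.2) p (1, 0) := by
  filter_upwards [h.ev_diff] with p hp using (Sm.hu' hp).deriv

lemma Sm.ev_dt (h : Sm f u t) : (fun p : ℝ × ℝ => dt f p.1 p.2) =ᶠ[𝓝 (u, t)]
    fun p => fderiv ℝ (fun p : ℝ × ℝ => f p.1 p.2) p (0, 1) := by
  filter_upwards [h.ev_diff] with p hp using (Sm.ht' hp).deriv

lemma Sm.fd (h : Sm f u t) :
    ContDiffAt ℝ ∞ (fderiv ℝ (fun p : ℝ × ℝ => f p.1 p.2)) (u, t) :=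
  ContDiffAt.fderiv_right h (by simp)

lemma Sm.du (h : Sm f u t) : Sm (du f) u t :=
  (h.fd.clm_apply contDiffAt_const).congr_of_eventuallyEq h.ev_du

lemma Sm.dt (h : Sm f u t) : Sm (dt f) u t :=
  (h.fd.clm_apply contDiffAt_const).congr_of_eventuallyEq h.ev_dt

lemma Sm.comm (h : Sm f u t) : CSFaux.dt (CSFaux.du f) u t = CSFaux.du (CSFaux.dt f) u t := by
  have hd := h.fd.differentiableAt (by simp)
  have hs := ContDiffAt.isSymmSndFDerivAt h (by
    rw [minSmoothness_of_isRCLikeNormedField]; exact WithTop.coe_le_coe.2 (le_top : (2 : ℕ∞) ≤ ⊤))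
  have e1 : CSFaux.dt (CSFaux.du f) u t
      = fderiv ℝ (fderiv ℝ (fun p : ℝ × ℝ => f p.1 p.2)) (u, t) (0, 1) (1, 0) := by
    refine (Sm.ht' h.du.diff).deriv.trans ?_
    rw [h.ev_du.fderiv_eq, fderiv_clm_apply hd (by fun_prop)]
    simp
  have e2 : CSFaux.du (CSFaux.dt f) u t
      = fderiv ℝ (fderiv ℝ (fun p : ℝ × ℝ => f p.1 p.2)) (u, t) (1, 0) (0, 1) := by
    refine (Sm.hu' h.dt.diff).deriv.trans ?_
    rw [h.ev_dt.fderiv_eq, fderiv_clm_apply hd (by fun_prop)]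
    simp
  rw [e1, e2, hs]

lemma Sm.mul (h : Sm f u t) (h' : Sm g u t) : Sm (fun u t => f u t * g u t) u t :=
  ContDiffAt.mul h h'
lemma Sm.add (h : Sm f u t) (h' : Sm g u t) : Sm (fun u t => f u t + g u t) u t :=
  ContDiffAt.add h h'
lemma Sm.sub (h : Sm f u t) (h' : Sm g u t) : Sm (fun u t => f u t - g u t) u t :=
  ContDiffAt.sub h h'
lemma Sm.pow (h : Sm f u t) (n : ℕ) : Sm (fun u t => f u t ^ n) u t :=
  ContDiffAt.pow h n
lemma Sm.inv (h : Sm f u t) (h0 : f u t ≠ 0) : Sm (fun u t => (f u t)⁻¹) u t :=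
  ContDiffAt.inv h h0
lemma Sm.sqrt (h : Sm f u t) (h0 : f u t ≠ 0) : Sm (fun u t => √(f u t)) u t :=
  ContDiffAt.sqrt h h0

lemma du_eq {U : Set (ℝ × ℝ)} (hU : IsOpen U) (hm : (u, t) ∈ U)
    (h : ∀ x y, (x, y) ∈ U → f x y = g x y) {g' : ℝ}
    (hg : HasDerivAt (fun x => g x t) g' u) : du f u t = g' := by
  refine (hg.congr_of_eventuallyEq ?_).deriv
  have hc : Continuous fun x : ℝ => (x, t) := by fun_prop
  filter_upwards [hc.continuousAt.preimage_mem_nhds (hU.mem_nhds hm)] with x hx using h _ _ hx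

lemma dt_eq {U : Set (ℝ × ℝ)} (hU : IsOpen U) (hm : (u, t) ∈ U)
    (h : ∀ x y, (x, y) ∈ U → f x y = g x y) {g' : ℝ}
    (hg : HasDerivAt (fun x => g u x) g' t) : dt f u t = g' := by
  refine (hg.congr_of_eventuallyEq ?_).deriv
  have hc : Continuous fun x : ℝ => (u, x) := by fun_prop
  filter_upwards [hc.continuousAt.preimage_mem_nhds (hU.mem_nhds hm)] with x hx using h _ _ hx

/-- Geometric evolution equations. -/
lemma core {U O : Set (ℝ × ℝ)} (hU : IsOpen U) (hO : IsOpen O) (hOU : O ⊆ U)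
    (p q v c s k w : ℝ → ℝ → ℝ)
    (hp : ∀ x y, (x, y) ∈ U → Sm p x y) (hq : ∀ x y, (x, y) ∈ U → Sm q x y)
    (hv : ∀ x y, (x, y) ∈ U → Sm v x y) (hc : ∀ x y, (x, y) ∈ U → Sm c x y)
    (hs : ∀ x y, (x, y) ∈ U → Sm s x y) (hk : ∀ x y, (x, y) ∈ U → Sm k x y)
    (hw : ∀ x y, (x, y) ∈ U → Sm w x y)
    (v0 : ∀ x y, (x, y) ∈ U → v x y ≠ 0)
    (ep : ∀ x y, (x, y) ∈ U → du p x y = v x y * c x y)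
    (eq : ∀ x y, (x, y) ∈ U → du q x y = v x y * s x y)
    (ecs : ∀ x y, (x, y) ∈ U → c x y * c x y + s x y * s x y = 1)
    (ek : ∀ x y, (x, y) ∈ U → k x y * v x y = c x y * du s x y - s x y * du c x y)
    (ew : ∀ x y, (x, y) ∈ U → du k x y = v x y * w x y)
    (tp : ∀ x y, (x, y) ∈ O → dt p x y = - (k x y * s x y))
    (tq : ∀ x y, (x, y) ∈ O → dt q x y = k x y * c x y) :
    ∀ x y, (x, y) ∈ O → dt v x y = - (k x y) ^ 2 * v x y ∧
      dt k x y * v x y = du w x y + (k x y) ^ 3 * v x y := by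
  have cu : ∀ x y, (x, y) ∈ U → du c x y = - (k x y * v x y * s x y) := by
    intro x y h
    have h1 := du_eq hU h (f := fun _ _ => 1) (fun x y h => (ecs x y h).symm)
      (((hc x y h).hu.fun_mul (hc x y h).hu).fun_add ((hs x y h).hu.fun_mul (hs x y h).hu))
    simp only [du, deriv_const] at h1
    simp only [← du.eq_def] at h1
    have := ek x y h
    have := ecs x y h
    simp only [du] at *
    grind
  have su : ∀ x y, (x, y) ∈ U → du s x y = k x y * v x y * c x y := by
    intro x y h
    have h1 := du_eq hU h (f := fun _ _ => 1) (fun x y h => (ecs x y h).symm)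
      (((hc x y h).hu.fun_mul (hc x y h).hu).fun_add ((hs x y h).hu.fun_mul (hs x y h).hu))
    simp only [du, deriv_const] at h1
    have := ek x y h
    have := ecs x y h
    simp only [du] at *
    grind
  have main : ∀ x y, (x, y) ∈ O → dt v x y = - (k x y) ^ 2 * v x y ∧
      dt c x y = - (w x y * s x y) ∧ dt s x y = w x y * c x y := by
    intro x y h
    have hh := hOU h
    have h1 := dt_eq hU hh (f := fun _ _ => 1) (fun x y h => (ecs x y h).symm)
      (((hc x y hh).ht.fun_mul (hc x y hh).ht).fun_add ((hs x y hh).ht.fun_mul (hs x y hh).ht))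
    have h1' : dt (fun _ _ => (1 : ℝ)) x y = 0 := by simp [dt]
    have h2 := dt_eq hU hh ep ((hv x y hh).ht.fun_mul (hc x y hh).ht)
    have h3 := dt_eq hU hh eq ((hv x y hh).ht.fun_mul (hs x y hh).ht)
    have h4 := du_eq hO h tp ((hk x y hh).hu.fun_mul (hs x y hh).hu).fun_neg
    have h5 := du_eq hO h tq ((hk x y hh).hu.fun_mul (hc x y hh).hu)
    rw [(hp x y hh).comm] at h2
    rw [(hq x y hh).comm] at h3
    rw [cu x y hh, ew x y hh] at h5
    rw [su x y hh, ew x y hh] at h4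
    have e := ecs x y hh
    have n := v0 x y hh
    refine ⟨by grind, ?_, ?_⟩
    · apply mul_left_cancel₀ n; grind
    · apply mul_left_cancel₀ n; grind
  intro x y h
  have hh := hOU h
  obtain ⟨m1, m2, m3⟩ := main x y h
  refine ⟨m1, ?_⟩
  have h2 := dt_eq hU hh cu (((hk x y hh).ht.fun_mul (hv x y hh).ht).fun_mul (hs x y hh).ht).fun_neg
  have h3 := dt_eq hU hh su (((hk x y hh).ht.fun_mul (hv x y hh).ht).fun_mul (hc x y hh).ht)
  have h4 := du_eq hO h (fun x y h => (main x y h).2.1)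
    ((hw x y hh).hu.fun_mul (hs x y hh).hu).fun_neg
  have h5 := du_eq hO h (fun x y h => (main x y h).2.2) ((hw x y hh).hu.fun_mul (hc x y hh).hu)
  rw [(hc x y hh).comm] at h2
  rw [(hs x y hh).comm] at h3
  have e := ecs x y hh
  rw [h4] at h2
  rw [h5] at h3
  rw [m1, m2, m3, cu x y hh, su x y hh] at *
  grind

lemma Sm.contOn {U : Set (ℝ × ℝ)} (h : ∀ x y, (x, y) ∈ U → Sm f x y) :
    ContinuousOn (fun p : ℝ × ℝ => f p.1 p.2) U :=
  fun p hp => (ContDiffAt.continuousAt (h p.1 p.2 hp)).continuousWithinAt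

lemma Sm.contU {a b y : ℝ} (h : ∀ x ∈ Icc a b, Sm f x y) :
    ContinuousOn (fun x => f x y) (Icc a b) :=
  fun x hx => (h x hx).hu.continuousAt.continuousWithinAt

/-- Leibniz rule. -/
lemma leib {a b T : ℝ} (hab : a < b) (G : ℝ → ℝ → ℝ)
    (hG : ∀ x ∈ Icc a b, ∀ y ∈ Ioo 0 T, Sm G x y) (t : ℝ) (ht : t ∈ Ioo 0 T) :
    HasDerivAt (fun y => ∫ x in a..b, G x y) (∫ x in a..b, dt G x t) t := by
  obtain ⟨ε, ε0, hε⟩ := Metric.nhds_basis_closedBall.mem_iff.1 (isOpen_Ioo.mem_nhds ht)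
  have hcont : ContinuousOn (fun p : ℝ × ℝ => dt G p.1 p.2)
      (Icc a b ×ˢ Metric.closedBall t ε) :=
    Sm.contOn fun x y h => (hG x h.1 y (hε h.2)).dt
  obtain ⟨C, hC⟩ := (isCompact_Icc.prod (isCompact_closedBall t ε)).exists_bound_of_continuousOn hcont
  have hI : uIoc a b ⊆ Icc a b := by rw [uIoc_of_le hab.le]; exact Ioc_subset_Icc_self
  refine (intervalIntegral.hasDerivAt_integral_of_dominated_loc_of_deriv_le
    (F := fun y x => G x y) (F' := fun y x => dt G x y) (bound := fun _ => C)
    (Metric.closedBall_mem_nhds t ε0) ?_ ?_ ?_ ?_ ?_ ?_).2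
  · filter_upwards [isOpen_Ioo.mem_nhds ht] with y hy
    exact ((Sm.contU fun x hx => hG x hx y hy).mono hI).aestronglyMeasurable measurableSet_uIoc
  · apply ContinuousOn.intervalIntegrable
    rw [uIcc_of_le hab.le]
    exact Sm.contU fun x hx => hG x hx t ht
  · exact ((Sm.contU fun x hx => (hG x hx t ht).dt).mono hI).aestronglyMeasurable
      measurableSet_uIoc
  · exact ae_of_all _ fun x hx y hy => hC (x, y) ⟨hI hx, hy⟩
  · exact intervalIntegrable_const
  · exact ae_of_all _ fun x hx y hy => (hG x (hI hx) y (hε hy)).ht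

lemma core2 {a b T : ℝ} (hab : a < b) (v k w z : ℝ → ℝ → ℝ) {U : Set (ℝ × ℝ)} (hU : IsOpen U)
    (hsub : ∀ x ∈ Icc a b, ∀ y ∈ Ioo 0 T, (x, y) ∈ U)
    (hv : ∀ x y, (x, y) ∈ U → Sm v x y) (hk : ∀ x y, (x, y) ∈ U → Sm k x y)
    (hw : ∀ x y, (x, y) ∈ U → Sm w x y) (hz : ∀ x y, (x, y) ∈ U → Sm z x y)
    (v0 : ∀ x y, (x, y) ∈ U → v x y ≠ 0)
    (ew : ∀ x y, (x, y) ∈ U → du k x y = v x y * w x y)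
    (ez : ∀ x y, (x, y) ∈ U → du w x y = v x y * z x y)
    (tv : ∀ x ∈ Ioo a b, ∀ y ∈ Ioo 0 T, dt v x y = - (k x y) ^ 2 * v x y)
    (tk : ∀ x ∈ Ioo a b, ∀ y ∈ Ioo 0 T,
      dt k x y * v x y = du w x y + (k x y) ^ 3 * v x y)
    (ka : ∀ y ∈ Ioo 0 T, k a y = 0) (kb : ∀ y ∈ Ioo 0 T, k b y = 0)
    (t : ℝ) (ht : t ∈ Ioo 0 T) :
    HasDerivAt (fun y => ∫ x in a..b, w x y ^ 2 * v x y)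
      (∫ x in a..b, (7 * k x t ^ 2 * w x t ^ 2 - 2 * z x t ^ 2) * v x t) t := by
  have tk' : ∀ x ∈ Ioo a b, ∀ y ∈ Ioo 0 T, dt k x y = z x y + (k x y) ^ 3 := by
    intro x hx y hy
    have hu := hsub x (Ioo_subset_Icc_self hx) y hy
    have := tk x hx y hy
    rw [ez x y hu] at this
    apply mul_right_cancel₀ (v0 x y hu)
    linarith
  have tk2 : ∀ x ∈ Icc a b, dt k x t = z x t + (k x t) ^ 3 := by
    have hS : ∀ x ∈ Icc a b, Sm k x t := fun x hx => hk _ _ (hsub x hx t ht)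
    have := Set.EqOn.of_subset_closure (s := Ioo a b) (t := Icc a b)
      (f := fun x => dt k x t) (g := fun x => z x t + (k x t) ^ 3)
      (fun x hx => tk' x hx t ht) (Sm.contU fun x hx => (hS x hx).dt)
      ((Sm.contU fun x hx => hz _ _ (hsub x hx t ht)).add ((Sm.contU hS).pow 3))
      Ioo_subset_Icc_self (by rw [closure_Ioo hab.ne])
    exact this
  have zend : ∀ x ∈ Icc a b, (∀ y ∈ Ioo 0 T, k x y = 0) → z x t = 0 := by
    intro x hx hk0
    have h1 : dt k x t = 0 := by
      have : (fun y => k x y) =ᶠ[𝓝 t] fun _ => 0 := by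
        filter_upwards [isOpen_Ioo.mem_nhds ht] with y hy using hk0 y hy
      rw [dt, this.deriv_eq]; simp
    have h2 := tk2 x hx
    rw [h1, hk0 t ht] at h2
    simpa using h2.symm
  have za := zend a (left_mem_Icc.2 hab.le) ka
  have zb := zend b (right_mem_Icc.2 hab.le) kb
  have hL := leib hab (fun x y => w x y ^ 2 * v x y)
    (fun x hx y hy => ((hw x y (hsub x hx y hy)).pow 2).mul (hv x y (hsub x hx y hy))) t ht
  convert hL using 1
  have hS : ∀ x ∈ Icc a b, (x, t) ∈ U := fun x hx => hsub x hx t ht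
  have hSz : ∀ x ∈ Icc a b, Sm (fun x y => 2 * w x y * z x y) x t := fun x hx =>
    ((ContDiffAt.mul contDiffAt_const (hw x t (hS x hx)) : Sm (fun x y => 2 * w x y) x t)).mul
      (hz x t (hS x hx))
  have hI : IntervalIntegrable (fun x => du (fun x y => 2 * w x y * z x y) x t) volume a b := by
    apply ContinuousOn.intervalIntegrable
    rw [uIcc_of_le hab.le]
    exact Sm.contU fun x hx => (hSz x hx).du
  have hI2 : IntervalIntegrable
      (fun x => (7 * k x t ^ 2 * w x t ^ 2 - 2 * z x t ^ 2) * v x t) volume a b := by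
    apply ContinuousOn.intervalIntegrable
    rw [uIcc_of_le hab.le]
    have c1 := Sm.contU fun x hx => hk x t (hS x hx)
    have c2 := Sm.contU fun x hx => hw x t (hS x hx)
    have c3 := Sm.contU fun x hx => hz x t (hS x hx)
    have c4 := Sm.contU fun x hx => hv x t (hS x hx)
    fun_prop
  have hzero : ∫ x in a..b, du (fun x y => 2 * w x y * z x y) x t = 0 := by
    rw [intervalIntegral.integral_eq_sub_of_hasDerivAt (f := fun x => 2 * w x t * z x t)
      (fun x hx => (hSz x (by rwa [uIcc_of_le hab.le] at hx)).hu) hI]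
    simp [za, zb]
  rw [← add_zero (∫ x in a..b, (7 * k x t ^ 2 * w x t ^ 2 - 2 * z x t ^ 2) * v x t), ← hzero,
    ← intervalIntegral.integral_add hI2 hI]
  apply intervalIntegral.integral_congr_ae
  rw [uIoc_of_le hab.le]
  have hb : ∀ᵐ x : ℝ, x ≠ b := by simp [ae_iff]
  filter_upwards [hb] with x hxb hx
  have hx' : x ∈ Ioo a b := ⟨hx.1, lt_of_le_of_ne hx.2 hxb⟩
  have hm := hS x (Ioo_subset_Icc_self hx')
  have hO : IsOpen (Ioo a b ×ˢ Ioo 0 T) := isOpen_Ioo.prod isOpen_Ioo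
  have e1 := dt_eq hU hm ew ((hv x t hm).ht.fun_mul (hw x t hm).ht)
  rw [(hk x t hm).comm] at e1
  have e2 := du_eq hO (⟨hx', ht⟩ : (x, t) ∈ Ioo a b ×ˢ Ioo 0 T)
    (fun x y h => tk' x h.1 y h.2) ((hz x t hm).hu.fun_add ((hk x t hm).hu.fun_pow 3))
  have e3 : dt (fun x y => w x y ^ 2 * v x y) x t = _ :=
    (((hw x t hm).ht.fun_pow 2).fun_mul (hv x t hm).ht).deriv
  have e4 : du (fun x y => 2 * w x y * z x y) x t = _ :=
    (((hw x t hm).hu.const_mul 2).fun_mul (hz x t hm).hu).deriv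
  rw [e3, e4]
  rw [e2, tv x hx' t ht, ew x t hm] at e1
  rw [ez x t hm, tv x hx' t ht]
  norm_num at e1 ⊢
  linear_combination 2 * w x t * e1

variable (F : ℝ → ℝ → E2)

def cP (i : Fin 2) (u t : ℝ) : ℝ := F u t i
def cT (i : Fin 2) (u t : ℝ) : ℝ := (CSF.speed F u t)⁻¹ * du (cP F i) u t

lemma deriv_comp_apply {g : ℝ → E2} {x : ℝ} (h : ∀ i, DifferentiableAt ℝ (fun y => g y i) x)
    (i : Fin 2) : (deriv g x) i = deriv (fun y => g y i) x := by
  have hg : DifferentiableAt ℝ g x := differentiableAt_euclidean.2 h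
  have := (EuclideanSpace.proj i : E2 →L[ℝ] ℝ).hasFDerivAt.comp_hasDerivAt
    x hg.hasDerivAt
  exact this.deriv.symm

variable {F}

lemma smP (hF : ContDiff ℝ (⊤ : ℕ∞) (fun p : ℝ × ℝ => F p.1 p.2)) (i : Fin 2) (x y : ℝ) :
    Sm (cP F i) x y :=
  (contDiff_euclidean.1 hF i).contDiffAt

lemma pu_apply (hF : ContDiff ℝ (⊤ : ℕ∞) (fun p : ℝ × ℝ => F p.1 p.2)) (i : Fin 2) (x y : ℝ) :
    CSF.pu F x y i = du (cP F i) x y :=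
  deriv_comp_apply (fun i => (smP hF i x y).hu.differentiableAt) i

lemma pt_apply (hF : ContDiff ℝ (⊤ : ℕ∞) (fun p : ℝ × ℝ => F p.1 p.2)) (i : Fin 2) (x y : ℝ) :
    CSF.pt F x y i = dt (cP F i) x y :=
  deriv_comp_apply (fun i => (smP hF i x y).ht.differentiableAt) i

lemma speed_eq (hF : ContDiff ℝ (⊤ : ℕ∞) (fun p : ℝ × ℝ => F p.1 p.2)) :
    CSF.speed F = fun x y => √(du (cP F 0) x y ^ 2 + du (cP F 1) x y ^ 2) := by
  funext x y
  simp only [CSF.speed, EuclideanSpace.norm_eq, Fin.sum_univ_two, pu_apply hF, Real.norm_eq_abs,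
    sq_abs]

lemma tang_apply (hF : ContDiff ℝ (⊤ : ℕ∞) (fun p : ℝ × ℝ => F p.1 p.2)) (i : Fin 2) (x y : ℝ) :
    CSF.tang F x y i = cT F i x y := by
  simp [CSF.tang, cT, pu_apply hF]

lemma sq_ne {x y : ℝ} (h : CSF.speed F x y ≠ 0)
    (hF : ContDiff ℝ (⊤ : ℕ∞) (fun p : ℝ × ℝ => F p.1 p.2)) :
    du (cP F 0) x y ^ 2 + du (cP F 1) x y ^ 2 ≠ 0 := by
  intro h0
  rw [speed_eq hF] at h
  simp [h0] at h

lemma smV (hF : ContDiff ℝ (⊤ : ℕ∞) (fun p : ℝ × ℝ => F p.1 p.2)) {x y : ℝ}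
    (h : CSF.speed F x y ≠ 0) : Sm (CSF.speed F) x y := by
  have h0 := sq_ne h hF
  rw [speed_eq hF]
  exact (((smP hF 0 x y).du.pow 2).add ((smP hF 1 x y).du.pow 2)).sqrt h0

lemma smT (hF : ContDiff ℝ (⊤ : ℕ∞) (fun p : ℝ × ℝ => F p.1 p.2)) {x y : ℝ}
    (h : CSF.speed F x y ≠ 0) (i : Fin 2) : Sm (cT F i) x y :=
  ((smV hF h).inv h).mul (smP hF i x y).du

lemma curv_eq (hF : ContDiff ℝ (⊤ : ℕ∞) (fun p : ℝ × ℝ => F p.1 p.2)) :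
    CSF.curv F = fun x y => (CSF.speed F x y)⁻¹ *
      (cT F 0 x y * du (cT F 1) x y - cT F 1 x y * du (cT F 0) x y) := by
  funext x y
  by_cases h : CSF.speed F x y = 0
  · simp [CSF.curv, CSF.sderiv, h]
  · have hd : ∀ i, (deriv (fun x => CSF.tang F x y) x) i = du (cT F i) x y := by
      intro i
      have e : ∀ i, (fun x => CSF.tang F x y i) = fun x => cT F i x y := by
        intro i; funext x; exact tang_apply hF i x y
      rw [deriv_comp_apply (fun i => by rw [e]; exact (smT hF h i).hu.differentiableAt), e]
      rfl
    simp only [CSF.curv, CSF.sderiv, CSF.nor, rot, PiLp.inner_apply, Fin.sum_univ_two,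
      PiLp.smul_apply, hd, tang_apply hF, smul_eq_mul]
    simp
    ring

lemma smK (hF : ContDiff ℝ (⊤ : ℕ∞) (fun p : ℝ × ℝ => F p.1 p.2)) {x y : ℝ}
    (h : CSF.speed F x y ≠ 0) : Sm (CSF.curv F) x y := by
  rw [curv_eq hF]
  exact ((smV hF h).inv h).mul (((smT hF h 0).mul (smT hF h 1).du).sub
    ((smT hF h 1).mul (smT hF h 0).du))

lemma smD (hF : ContDiff ℝ (⊤ : ℕ∞) (fun p : ℝ × ℝ => F p.1 p.2)) {x y : ℝ}
    (h : CSF.speed F x y ≠ 0) {f : ℝ → ℝ → ℝ} (hf : Sm f x y) : Sm (CSF.sderiv F f) x y :=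
  ((smV hF h).inv h).mul hf.du

lemma du_eq_sderiv {x y : ℝ} (h : CSF.speed F x y ≠ 0) (f : ℝ → ℝ → ℝ) :
    du f x y = CSF.speed F x y * CSF.sderiv F f x y := by
  simp only [CSF.sderiv, du, smul_eq_mul]
  field_simp

lemma openU (hF : ContDiff ℝ (⊤ : ℕ∞) (fun p : ℝ × ℝ => F p.1 p.2)) :
    IsOpen {p : ℝ × ℝ | CSF.speed F p.1 p.2 ≠ 0} := by
  have hc : Continuous fun p : ℝ × ℝ => CSF.speed F p.1 p.2 := by
    have h : ∀ i, Continuous fun p : ℝ × ℝ => du (cP F i) p.1 p.2 := fun i =>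
      continuousOn_univ.1 (Sm.contOn fun x y _ => (smP hF i x y).du)
    have h0 := h 0
    have h1 := h 1
    rw [speed_eq hF]
    fun_prop
  exact isOpen_ne_fun hc continuous_const

end CSFaux

/-- with κ = 0 at the endpoints,
d/dt ∫ₐᵇ (∂ₛκ)² v du = ∫ₐᵇ (7κ²(∂ₛκ)² - 2(∂ₛ²κ)²) v du for every t ∈ (0,T). -/
theorem L2_curvature_derivative_evolution (a b T : ℝ) (hab : a < b) (hT : 0 < T)
    (F : ℝ → ℝ → E2) (hF : CSF.IsCSF F a b T)
    (hbc : ∀ t ∈ Ico 0 T, CSF.curv F a t = 0 ∧ CSF.curv F b t = 0) :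
    ∀ t ∈ Ioo 0 T,
      HasDerivAt (fun x => ∫ u in a..b, (CSF.sderiv F (CSF.curv F) u x) ^ 2 * CSF.speed F u x)
        (∫ u in a..b,
          (7 * (CSF.curv F u t) ^ 2 * (CSF.sderiv F (CSF.curv F) u t) ^ 2
              - 2 * (CSF.sderiv F (CSF.sderiv F (CSF.curv F)) u t) ^ 2)
            * CSF.speed F u t) t := by
  obtain ⟨hS, hne, hflow⟩ := hF
  have hsub : ∀ x ∈ Icc a b, ∀ y ∈ Ico 0 T, CSF.speed F x y ≠ 0 := fun x hx y hy =>
    norm_ne_zero_iff.2 (hne x hx y hy)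
  have hI : ∀ y ∈ Ioo 0 T, y ∈ Ico 0 T := fun y hy => Ioo_subset_Ico_self hy
  have hO : IsOpen (Ioo a b ×ˢ Ioo 0 T) := isOpen_Ioo.prod isOpen_Ioo
  have hflow' : ∀ x y, (x, y) ∈ Ioo a b ×ˢ Ioo 0 T →
      CSF.pt F x y = CSF.curv F x y • CSF.nor F x y := fun x y h =>
    hflow x (Ioo_subset_Icc_self h.1) y (hI y h.2)
  have key := CSFaux.core (CSFaux.openU hS) hO
    (fun p hp => hsub p.1 (Ioo_subset_Icc_self hp.1) p.2 (hI _ hp.2))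
    (CSFaux.cP F 0) (CSFaux.cP F 1) (CSF.speed F) (CSFaux.cT F 0) (CSFaux.cT F 1)
    (CSF.curv F) (CSF.sderiv F (CSF.curv F))
    (fun x y _ => CSFaux.smP hS 0 x y) (fun x y _ => CSFaux.smP hS 1 x y)
    (fun x y h => CSFaux.smV hS h) (fun x y h => CSFaux.smT hS h 0)
    (fun x y h => CSFaux.smT hS h 1) (fun x y h => CSFaux.smK hS h)
    (fun x y h => CSFaux.smD hS h (CSFaux.smK hS h))
    (fun x y h => h)
    (fun x y h => by
      have h' : CSF.speed F x y ≠ 0 := h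
      simp only [CSFaux.cT]; field_simp)
    (fun x y h => by
      have h' : CSF.speed F x y ≠ 0 := h
      simp only [CSFaux.cT]; field_simp)
    (fun x y h => by
      have h' : CSF.speed F x y ≠ 0 := h
      have h2 : CSF.speed F x y ^ 2
          = CSFaux.du (CSFaux.cP F 0) x y ^ 2 + CSFaux.du (CSFaux.cP F 1) x y ^ 2 := by
        rw [CSFaux.speed_eq hS]
        exact Real.sq_sqrt (by positivity)
      simp only [CSFaux.cT]
      field_simp
      linarith)
    (fun x y h => by
      have h' : CSF.speed F x y ≠ 0 := h
      rw [CSFaux.curv_eq hS]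
      field_simp)
    (fun x y h => CSFaux.du_eq_sderiv h _)
    (fun x y h => by
      rw [← CSFaux.pt_apply hS, hflow' x y h]
      simp [CSF.nor, rot, CSFaux.tang_apply hS])
    (fun x y h => by
      rw [← CSFaux.pt_apply hS, hflow' x y h]
      simp [CSF.nor, rot, CSFaux.tang_apply hS])
  exact CSFaux.core2 hab (CSF.speed F) (CSF.curv F) (CSF.sderiv F (CSF.curv F))
    (CSF.sderiv F (CSF.sderiv F (CSF.curv F))) (CSFaux.openU hS)
    (fun x hx y hy => hsub x hx y (hI y hy))
    (fun x y h => CSFaux.smV hS h) (fun x y h => CSFaux.smK hS h)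
    (fun x y h => CSFaux.smD hS h (CSFaux.smK hS h))
    (fun x y h => CSFaux.smD hS h (CSFaux.smD hS h (CSFaux.smK hS h)))
    (fun x y h => h)
    (fun x y h => CSFaux.du_eq_sderiv h _) (fun x y h => CSFaux.du_eq_sderiv h _)
    (fun x hx y hy => (key x y ⟨hx, hy⟩).1) (fun x hx y hy => (key x y ⟨hx, hy⟩).2)
    (fun y hy => (hbc y (hI y hy)).1) (fun y hy => (hbc y (hI y hy)).2)
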